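/- Let q be a prime and let k be an integer with gcd(k, q) = 1. Then Σ_χ τ(χ)² · χ̄(k) = (q − 1) · Σ_{a=1}^{q−1} e((a + k·a*)/q) − 1, where the outer sum runs over all nontrivial Dirichlet characters χ modulo q, a* denotes a multiplicative inverse of a modulo q, and the inner sum is the Kloosterman sum S(1, k; q). -/

import Mathlib

open Complex

open scoped Classical

/-- The additive character `e(a/q) = e^{2πi a/q}` on `ZMod q`. -/
noncomputable def eZMod (q : ℕ) [NeZero q] (a : ZMod q) : ℂ :=
  Complex.exp (2 * Real.pi * I * a.val / q)

/-- The Gauss sum `τ(χ) = ∑_{a mod q} χ(a) e(a/q)` of a Dirichlet character mod `q`. -/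
noncomputable def gaussSumE {q : ℕ} [NeZero q] (χ : DirichletCharacter ℂ q) : ℂ :=
  ∑ a : ZMod q, χ a * eZMod q a

lemma eZMod_eq (q : ℕ) [NeZero q] (a : ZMod q) : eZMod q a = ZMod.stdAddChar a := by
  have := ZMod.stdAddChar_coe (N := q) (a.val : ℤ)
  simp only [Int.cast_natCast, ZMod.natCast_zmod_val] at this
  rw [this, eZMod]

lemma eZMod_add (q : ℕ) [NeZero q] (a b : ZMod q) :
    eZMod q (a + b) = eZMod q a * eZMod q b := by
  simp only [eZMod_eq, AddChar.map_add_eq_mul]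

lemma sum_units_aux (q : ℕ) [NeZero q] (f : ZMod q → ℂ)
    (hf : ∀ a, ¬ IsUnit a → f a = 0) : ∑ a : ZMod q, f a = ∑ u : (ZMod q)ˣ, f u := by
  symm
  apply Finset.sum_of_injOn (fun u : (ZMod q)ˣ => (u : ZMod q))
  · intro a _ b _ hab
    exact Units.ext hab
  · intro a _
    simp
  · intro a _ ha
    apply hf
    rintro ⟨u, rfl⟩
    exact ha ⟨u, by simp, rfl⟩
  · intros
    rfl

lemma gaussSumE_units (q : ℕ) [NeZero q] (χ : DirichletCharacter ℂ q) :
    gaussSumE χ = ∑ u : (ZMod q)ˣ, χ u * eZMod q u := by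
  rw [gaussSumE]
  apply sum_units_aux q (fun a => χ a * eZMod q a)
  intro a ha
  simp [χ.map_nonunit ha]

lemma gaussSumE_one (q : ℕ) [NeZero q] (hq : q.Prime) :
    gaussSumE (1 : DirichletCharacter ℂ q) = -1 := by
  haveI : Fact q.Prime := ⟨hq⟩
  have h0 : ∑ a : ZMod q, eZMod q a = 0 := by
    simp only [eZMod_eq]
    apply AddChar.sum_eq_zero_of_ne_one
    have h2 := ZMod.isPrimitive_stdAddChar q (one_ne_zero : (1 : ZMod q) ≠ 0)
    rwa [AddChar.mulShift_one] at h2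
  rw [gaussSumE, ← Finset.add_sum_erase _ _ (Finset.mem_univ (0 : ZMod q))]
  rw [← Finset.add_sum_erase _ _ (Finset.mem_univ (0 : ZMod q))] at h0
  have h1 : eZMod q 0 = 1 := by simp [eZMod]
  rw [h1] at h0
  rw [MulChar.map_nonunit _ (by simp), zero_mul, zero_add, ← eq_neg_of_add_eq_zero_right h0]
  apply Finset.sum_congr rfl
  intro a ha
  rw [MulChar.one_apply (isUnit_iff_ne_zero.2 (Finset.ne_of_mem_erase ha)), one_mul]

lemma conj_char (q : ℕ) [NeZero q] (χ : DirichletCharacter ℂ q) (u : (ZMod q)ˣ) :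
    (starRingEnd ℂ) (χ u) = χ ((u⁻¹ : (ZMod q)ˣ) : ZMod q) := by
  have := MulChar.star_apply' χ (u : ZMod q)
  rw [← starRingEnd_apply] at this
  rw [this, MulChar.inv_apply, Ring.inverse_unit]

lemma sum_all (q : ℕ) [NeZero q] (κ : (ZMod q)ˣ) :
    ∑ χ : DirichletCharacter ℂ q, gaussSumE χ ^ 2 * (starRingEnd ℂ) (χ κ) =
      (q.totient : ℂ) * ∑ a : (ZMod q)ˣ,
        eZMod q ((a : ZMod q) + (κ : ZMod q) * ((a⁻¹ : (ZMod q)ˣ) : ZMod q)) := by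
  have h1 : ∀ χ : DirichletCharacter ℂ q, gaussSumE χ ^ 2 * (starRingEnd ℂ) (χ κ) =
      ∑ u : (ZMod q)ˣ, ∑ v : (ZMod q)ˣ,
        eZMod q ((u : ZMod q) + v) * χ ((u * v * κ⁻¹ : (ZMod q)ˣ) : ZMod q) := by
    intro χ
    rw [conj_char, gaussSumE_units, sq, Finset.sum_mul_sum, Finset.sum_mul]
    refine Finset.sum_congr rfl fun u _ => ?_
    rw [Finset.sum_mul]
    refine Finset.sum_congr rfl fun v _ => ?_
    rw [eZMod_add]
    simp only [Units.val_mul, map_mul]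
    ring
  simp only [h1]
  rw [Finset.sum_comm, Finset.mul_sum]
  refine Finset.sum_congr rfl fun u _ => ?_
  rw [Finset.sum_comm]
  simp only [← Finset.mul_sum]
  rw [Finset.sum_eq_single (κ * u⁻¹)]
  · have h2 : u * (κ * u⁻¹) * κ⁻¹ = 1 := by
      rw [mul_comm κ, mul_inv_cancel_left, mul_inv_cancel]
    rw [h2, mul_comm, Units.val_one, Units.val_mul]
    congr 1
    have := DirichletCharacter.sum_characters_eq ℂ (1 : ZMod q)
    rw [if_pos rfl] at this
    convert this
  · intro v _ hv
    have : ((u * v * κ⁻¹ : (ZMod q)ˣ) : ZMod q) ≠ 1 := by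
      intro hh
      apply hv
      have h3 : u * v * κ⁻¹ = 1 := Units.ext hh
      rw [mul_inv_eq_one] at h3
      rw [← h3, mul_comm u, mul_inv_cancel_right]
    have h4 := DirichletCharacter.sum_characters_eq_zero ℂ this
    refine mul_eq_zero_of_right _ ?_
    convert h4
  · simp

/-- For `q` prime and `k` an integer with `gcd(k, q) = 1`,
`∑_{χ ≠ 1 mod q} τ(χ)² χ̄(k) = (q - 1) · S(1, k; q) − 1`, where
`S(1, k; q) = ∑_{a=1}^{q-1} e((a + k a*)/q)` is the Kloosterman sum (the sum running
over invertible residues `a` mod `q`, with `a*` the inverse of `a`), and the outer sum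
is over all nontrivial (equivalently, primitive) Dirichlet characters mod `q`. -/
theorem stmt7 (q : ℕ) [NeZero q] (hq : q.Prime) (k : ℤ) (h : Int.gcd k q = 1) :
    ∑ χ ∈ Finset.univ.filter (fun χ : DirichletCharacter ℂ q => χ ≠ 1),
        gaussSumE χ ^ 2 * (starRingEnd ℂ) (χ (k : ZMod q)) =
      (q - 1 : ℂ) *
          (∑ a : (ZMod q)ˣ,
            eZMod q ((a : ZMod q) + (k : ZMod q) * ((a⁻¹ : (ZMod q)ˣ) : ZMod q))) - 1 := by
  haveI : Fact q.Prime := ⟨hq⟩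
  have hu : IsUnit (k : ZMod q) := by
    rw [ZMod.coe_int_isUnit_iff_isCoprime]
    exact (Int.isCoprime_iff_gcd_eq_one.2 h).symm
  obtain ⟨κ, hκ⟩ := hu
  rw [← hκ]
  have hs := sum_all q κ
  rw [← Finset.sum_filter_add_sum_filter_not Finset.univ
    (fun χ : DirichletCharacter ℂ q => χ ≠ 1)] at hs
  have h1 : Finset.univ.filter (fun χ : DirichletCharacter ℂ q => ¬ χ ≠ 1) = {1} := by
    ext χ
    simp
  rw [h1, Finset.sum_singleton, gaussSumE_one q hq, MulChar.one_apply κ.isUnit,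
    Nat.totient_prime hq, Nat.cast_sub hq.one_le] at hs
  simp only [Nat.cast_one, map_one] at hs
  rw [← hs]
  ring
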